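/- arXiv:1205.0343 — 2 statements merged into one kernel-verified Lean document; each statement's English description precedes it below -/
import Mathlib

section
/- Let k ≥ 3 and let n_1, …, n_k be positive integers such that n_1 is odd with n_1 ≠ 3, and n_i is even with n_i ≥ 4 for every i with 2 ≤ i ≤ k. Then the signed domination number of the complete k-partite graph K_{n_1,…,n_k} equals 5. -/
open scoped Classical

/-- The signed domination number of a finite simple graph `G`: the minimum weight of a
function `f : V → {−1, 1}` such that `f(N[v]) ≥ 1` for every vertex `v`. -/
noncomputable def signedDomNum {V : Type*} [Fintype V] (G : SimpleGraph V) : ℤ :=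
  sInf {w : ℤ | ∃ f : V → ℤ, (∀ v, f v = 1 ∨ f v = -1) ∧
    (∀ v, 1 ≤ f v + ∑ u ∈ G.neighborFinset v, f u) ∧ w = ∑ v, f v}

/-!
A signed dominating function on a complete multipartite graph matters only through its part sums
`s i`: with `T = ∑ i, s i`, the closed neighborhood of a vertex `v` in part `i` has sum
`f v + T - s i`. So `T - s i ≥ 2` unless part `i` contains no `-1`, and then `T - s i ≥ 0` suffices.

If part `z` is odd and the others are even of size at least `4`, then `T` is odd. Were `T ≤ 3`, an
even part could not be constantly `1`, so `s i ≤ T - 2` for `i ≠ z`, hence `s i ≤ T - 3` by parity.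
Summing over `i ≠ z` bounds `T - s z ≥ 0` by a positive multiple of `T - 3`, so `T = s z = 3`; as
`T - s z < 2`, part `z` is constantly `1` and thus has exactly three vertices. The part sums
`1, 2, 2, 0, …, 0` attain `T = 5`.
-/

/-- `f` is a signed dominating function of `G`: a feasible function in the definition of
`signedDomNum`, hence encoded as integer-valued with a constraint on its values. -/
def IsSignedDominating {V : Type*} [Fintype V] (G : SimpleGraph V) (f : V → ℤ) : Prop :=
  (∀ v, f v = 1 ∨ f v = -1) ∧ ∀ v, 1 ≤ f v + ∑ u ∈ G.neighborFinset v, f u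

theorem signedDomNum_eq_sInf_isSignedDominating {V : Type*} [Fintype V] (G : SimpleGraph V) :
    signedDomNum G = sInf {w | ∃ f, IsSignedDominating G f ∧ w = ∑ v, f v} := by
  simp only [signedDomNum, IsSignedDominating, and_assoc]

section SignSums

variable {α : Type*} [Fintype α] {f : α → ℤ}

theorem even_sum_sub_card_of_sign (hf : ∀ x, f x = 1 ∨ f x = -1) :
    Even (∑ x, f x - Fintype.card α) := by
  have hsum : ∑ x, f x - Fintype.card α = ∑ x, (f x - 1) := by simp
  rw [hsum]
  refine Finset.even_sum _ fun x _ => ?_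
  rcases hf x with h | h <;> rw [h] <;> decide

theorem abs_sum_le_card_of_sign (hf : ∀ x, f x = 1 ∨ f x = -1) :
    |∑ x, f x| ≤ Fintype.card α := by
  have habs : ∀ x, |f x| = 1 := fun x => by rcases hf x with h | h <;> simp [h]
  simpa [habs] using Finset.abs_sum_le_sum_abs f Finset.univ

theorem sum_eq_card_iff_of_le_one (hf : ∀ x, f x ≤ 1) :
    ∑ x, f x = Fintype.card α ↔ ∀ x, f x = 1 := by
  simpa using Finset.sum_eq_sum_iff_of_le fun x (_ : x ∈ Finset.univ) => hf x

theorem exists_sign_sum_eq {m : ℤ} (hm : |m| ≤ Fintype.card α)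
    (heven : Even (m - Fintype.card α)) :
    ∃ f : α → ℤ, (∀ x, f x = 1 ∨ f x = -1) ∧ ∑ x, f x = m := by
  obtain ⟨c, hc⟩ := heven
  obtain ⟨hneg, hpos⟩ := abs_le.1 hm
  obtain ⟨t, -, ht⟩ :=
    Finset.exists_subset_card_eq (s := (Finset.univ : Finset α)) (n := (-c).toNat) (by
      rw [Finset.card_univ]; omega)
  refine ⟨fun x => 1 - 2 * if x ∈ t then 1 else 0, fun x => ?_, ?_⟩
  · dsimp only
    split_ifs <;> decide
  · simp only [Finset.sum_sub_distrib, ← Finset.mul_sum, Finset.sum_const, Finset.card_univ,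
      nsmul_eq_mul, mul_one, Finset.sum_boole, Finset.filter_univ_mem, ht]
    omega

end SignSums

/-- A family `s` of integers is a dominating profile for the part sizes `n` if it satisfies the
conditions characterizing the part sums of a signed dominating function on the complete
multipartite graph with nonempty parts of sizes `n`. A part has no vertex of value `-1` exactly when
`s i = n i`. -/
structure IsDominatingProfile {ι : Type*} [Fintype ι] (n : ι → ℕ) (s : ι → ℤ) : Prop where
  abs_le : ∀ i, |s i| ≤ n i
  even_sub : ∀ i, Even (s i - n i)
  nonneg : ∀ i, 0 ≤ ∑ j, s j - s i
  two_le : ∀ i, s i ≠ n i → 2 ≤ ∑ j, s j - s i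

section CompleteMultipartite

variable {ι : Type*} [Fintype ι] {V : ι → Type*} [∀ i, Fintype (V i)]

theorem sum_neighborFinset_completeMultipartiteGraph {M : Type*} [AddCommGroup M]
    (f : (Σ i, V i) → M) (v : Σ i, V i)
    [Fintype ((SimpleGraph.completeMultipartiteGraph V).neighborSet v)] :
    ∑ u ∈ (SimpleGraph.completeMultipartiteGraph V).neighborFinset v, f u =
      ∑ i, ∑ x, f ⟨i, x⟩ - ∑ x, f ⟨v.1, x⟩ := by
  have hnbr : (SimpleGraph.completeMultipartiteGraph V).neighborFinset v =
      (Finset.univ.erase v.1).sigma fun _ => Finset.univ := by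
    ext u
    simp [SimpleGraph.completeMultipartiteGraph, eq_comm]
  rw [hnbr, Finset.sum_sigma, Finset.sum_erase_eq_sub (Finset.mem_univ v.1)]

theorem IsSignedDominating.isDominatingProfile [∀ i, Nonempty (V i)] {f : (Σ i, V i) → ℤ}
    (hf : IsSignedDominating (SimpleGraph.completeMultipartiteGraph V) f) :
    IsDominatingProfile (fun i => Fintype.card (V i)) fun i => ∑ x, f ⟨i, x⟩ := by
  obtain ⟨hsign, hdom⟩ := hf
  simp only [sum_neighborFinset_completeMultipartiteGraph] at hdom
  have hle : ∀ v, f v ≤ 1 := fun v => by have := hsign v; omega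
  refine ⟨fun i => abs_sum_le_card_of_sign fun x => hsign ⟨i, x⟩,
    fun i => even_sum_sub_card_of_sign fun x => hsign ⟨i, x⟩, fun i => ?_, fun i hi => ?_⟩
  · obtain ⟨x⟩ := ‹∀ i, Nonempty (V i)› i
    linarith [hdom ⟨i, x⟩, hle ⟨i, x⟩]
  · rw [ne_eq, sum_eq_card_iff_of_le_one fun x => hle ⟨i, x⟩, not_forall] at hi
    obtain ⟨x, hx⟩ := hi
    linarith [hdom ⟨i, x⟩, (hsign ⟨i, x⟩).resolve_left hx]

theorem IsDominatingProfile.exists_isSignedDominating {s : ι → ℤ}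
    (hs : IsDominatingProfile (fun i => Fintype.card (V i)) s) :
    ∃ f, IsSignedDominating (SimpleGraph.completeMultipartiteGraph V) f ∧
      ∀ i, ∑ x, f ⟨i, x⟩ = s i := by
  choose g hsign hsum using fun i => exists_sign_sum_eq (hs.abs_le i) (hs.even_sub i)
  refine ⟨fun v => g v.1 v.2, ⟨fun v => hsign v.1 v.2, ?_⟩, hsum⟩
  rintro ⟨i, x⟩
  simp only [sum_neighborFinset_completeMultipartiteGraph, hsum]
  rcases hsign i x with hx | hx
  · linarith [hs.nonneg i]
  · have hne : s i ≠ Fintype.card (V i) := by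
      rw [← hsum i, ne_eq, sum_eq_card_iff_of_le_one fun y => by have := hsign i y; omega]
      exact fun hone => by simp [hone x] at hx
    linarith [hs.two_le i hne]

theorem signedDomNum_completeMultipartiteGraph [∀ i, Nonempty (V i)] :
    signedDomNum (SimpleGraph.completeMultipartiteGraph V) =
      sInf {w | ∃ s, IsDominatingProfile (fun i => Fintype.card (V i)) s ∧ w = ∑ i, s i} := by
  rw [signedDomNum_eq_sInf_isSignedDominating]
  congr 1
  ext w
  constructor
  · rintro ⟨f, hf, rfl⟩
    exact ⟨_, hf.isDominatingProfile, Fintype.sum_sigma f⟩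
  · rintro ⟨s, hs, rfl⟩
    obtain ⟨f, hf, hsum⟩ := hs.exists_isSignedDominating
    exact ⟨f, hf, by simp only [Fintype.sum_sigma, hsum]⟩

end CompleteMultipartite

section OneOddPart

variable {ι : Type*} [Fintype ι] {n : ι → ℕ} {s : ι → ℤ} {z : ι}

theorem IsDominatingProfile.odd_sum (hs : IsDominatingProfile n s) (hz : Odd (n z))
    (heven : ∀ i ≠ z, Even (n i)) : Odd (∑ i, s i) := by
  have hodd : Odd (s z) := by
    simpa [Int.even_sub', hz] using hs.even_sub z
  have hrest : Even (∑ i ∈ Finset.univ.erase z, s i) := Finset.even_sum _ fun i hi => by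
    simpa [Int.even_sub, heven i (Finset.ne_of_mem_erase hi)] using hs.even_sub i
  rw [← Finset.add_sum_erase _ _ (Finset.mem_univ z)]
  exact hodd.add_even hrest

theorem IsDominatingProfile.le_sum_sub_three (hs : IsDominatingProfile n s) {i : ι}
    (hi : Even (n i)) (hodd : Odd (∑ j, s j)) (hlt : ∑ j, s j < n i) :
    s i ≤ ∑ j, s j - 3 := by
  have hne : s i ≠ n i := by linarith [hs.nonneg i]
  have hsi : Even (s i) := by simpa [Int.even_sub, hi] using hs.even_sub i
  have htwo := hs.two_le i hne
  grind

theorem IsDominatingProfile.five_le_sum [Nontrivial ι] (hs : IsDominatingProfile n s)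
    (hz : Odd (n z)) (hz3 : n z ≠ 3) (hrest : ∀ i ≠ z, Even (n i) ∧ 4 ≤ n i) :
    5 ≤ ∑ i, s i := by
  have hodd := hs.odd_sum hz fun i hi => (hrest i hi).1
  by_contra! hlt
  have hle_three : ∑ i, s i ≤ 3 := by grind
  have hle : ∀ i ∈ Finset.univ.erase z, s i ≤ ∑ j, s j - 3 := fun i hi => by
    obtain ⟨heven, hfour⟩ := hrest i (Finset.ne_of_mem_erase hi)
    exact hs.le_sum_sub_three heven hodd (by omega)
  have hsum := Finset.sum_erase_eq_sub (f := s) (Finset.mem_univ z)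
  have hthree : ∑ i, s i = 3 := by
    by_contra hne
    have hneg : ∑ i ∈ Finset.univ.erase z, s i < 0 :=
      Finset.sum_neg (fun i hi => (hle i hi).trans_lt (by omega))
        ((exists_ne z).imp fun i hi => by simpa using hi)
    linarith [hs.nonneg z]
  have hnonpos : ∑ i ∈ Finset.univ.erase z, s i ≤ 0 :=
    Finset.sum_nonpos fun i hi => (hle i hi).trans (by omega)
  have hone : s z = n z := by
    by_contra hne
    linarith [hs.two_le z hne]
  have := hs.nonneg z
  omega

theorem exists_isDominatingProfile_sum_eq_five (hι : 3 ≤ Fintype.card ι) (hz : Odd (n z))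
    (hrest : ∀ i ≠ z, Even (n i) ∧ 2 ≤ n i) :
    ∃ s, IsDominatingProfile n s ∧ ∑ i, s i = 5 := by
  obtain ⟨t, htz, ht⟩ : ∃ t ⊆ Finset.univ.erase z, t.card = 2 :=
    Finset.exists_subset_card_eq (by
      rw [Finset.card_erase_of_mem (Finset.mem_univ z), Finset.card_univ]; omega)
  have hzt : z ∉ t := fun h => Finset.notMem_erase z _ (htz h)
  obtain ⟨s, hsz, hst, hs0⟩ : ∃ s : ι → ℤ,
      s z = 1 ∧ (∀ i ∈ t, s i = 2) ∧ ∀ i ∉ insert z t, s i = 0 :=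
    ⟨fun i => if i = z then 1 else if i ∈ t then 2 else 0, by grind⟩
  have hsum : ∑ i, s i = 5 := by
    rw [← Finset.sum_subset (Finset.subset_univ (insert z t)) fun i _ => hs0 i,
      Finset.sum_insert hzt, hsz, Finset.sum_congr rfl hst, Finset.sum_const, ht]
    rfl
  have hcases : ∀ i, i = z ∧ s i = 1 ∨ i ≠ z ∧ (s i = 2 ∨ s i = 0) := by grind
  have hbounds : ∀ i, 0 ≤ s i ∧ s i ≤ 2 := by grind
  have hle : ∀ i, s i ≤ n i := by grind
  have heven : ∀ i, Even (s i - n i) := by grind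
  exact ⟨s, ⟨fun i => (abs_of_nonneg (hbounds i).1).trans_le (hle i), heven,
    fun i => by linarith [(hbounds i).2], fun i _ => by linarith [(hbounds i).2]⟩, hsum⟩

end OneOddPart

theorem signedDomNum_eq_five_multipartite_general {ι : Type*} [Fintype ι] {V : ι → Type*}
    [∀ i, Fintype (V i)] (hι : 3 ≤ Fintype.card ι) (z : ι) (hz : Odd (Fintype.card (V z)))
    (hz3 : Fintype.card (V z) ≠ 3)
    (hrest : ∀ i ≠ z, Even (Fintype.card (V i)) ∧ 4 ≤ Fintype.card (V i)) :
    signedDomNum (SimpleGraph.completeMultipartiteGraph V) = 5 := by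
  have : Nontrivial ι := Fintype.one_lt_card_iff_nontrivial.1 (by omega)
  have : ∀ i, Nonempty (V i) := fun i => Fintype.card_pos_iff.1 <| by
    obtain rfl | hi := eq_or_ne i z
    · exact hz.pos
    · linarith [(hrest i hi).2]
  rw [signedDomNum_completeMultipartiteGraph]
  obtain ⟨s, hs, hsum⟩ := exists_isDominatingProfile_sum_eq_five hι hz fun i hi =>
    (hrest i hi).imp_right fun h => by omega
  refine IsLeast.csInf_eq ⟨⟨s, hs, hsum.symm⟩, ?_⟩
  rintro w ⟨s', hs', rfl⟩
  exact hs'.five_le_sum hz hz3 hrest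

theorem signedDomNum_eq_five_multipartite
    (k : ℕ) (hk : 3 ≤ k) (n : Fin k → ℕ) (hn : ∀ i, 0 < n i)
    (h₁ : Odd (n ⟨0, by omega⟩)) (h₁' : n ⟨0, by omega⟩ ≠ 3)
    (h₂ : ∀ i : Fin k, i ≠ ⟨0, by omega⟩ → Even (n i) ∧ 4 ≤ n i) :
    signedDomNum (SimpleGraph.completeMultipartiteGraph fun i : Fin k => Fin (n i)) = 5 :=
  signedDomNum_eq_five_multipartite_general (by simpa using hk) ⟨0, by omega⟩ (by simpa using h₁)
    (by simpa using h₁') (by simpa using h₂)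
end

section
/- Let n_1 and n_2 be odd integers with min{n_1, n_2} = 3. Then the signed domination number of the complete bipartite graph K_{n_1,n_2} equals 4. -/
open scoped Classical

/-!
Let `s` and `t` be the sums of a signed dominating function over the two parts of `K_{m,n}`. A
vertex of the first part forces `t ≥ 0`, and `t ≥ 2` if it carries the value `-1`; symmetrically
for `s`. For odd `m` and `n` both sums are odd, so these bounds improve to `s, t ≥ 1` and `t ≥ 3`:
either the first part is constantly `1` and `s + t ≥ m + 1`, or `s + t ≥ 1 + 3`. For `m = 3` the
two cases agree, and the value `4` is attained by putting `1` on all of the first part and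
distributing signs with sum `1` over the second.
-/

open Finset

section SignSums

variable {ι : Type*} [Fintype ι]

lemma odd_sum_of_odd_card {R : Type*} [Semiring R] {f : ι → R} (hι : Odd (Fintype.card ι))
    (hf : ∀ i, Odd (f i)) : Odd (∑ i, f i) := by
  choose k hk using hf
  have hsum : ∑ i, f i = 2 * ∑ i, k i + (Fintype.card ι : R) := by
    simp [hk, sum_add_distrib, mul_sum]
  rw [hsum]
  exact (even_two_mul _).add_odd hι.natCast

lemma exists_eq_one_or_eq_neg_one_and_sum_eq_one {R : Type*} [Ring R]
    (hι : Odd (Fintype.card ι)) : ∃ f : ι → R, (∀ i, f i = 1 ∨ f i = -1) ∧ ∑ i, f i = 1 := by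
  let e := Fintype.equivFin ι
  refine ⟨fun i ↦ (-1) ^ (e i : ℕ), fun i ↦ neg_one_pow_eq_or R _, ?_⟩
  rw [e.sum_comp fun j ↦ (-1 : R) ^ (j : ℕ), Fin.sum_univ_eq_sum_range (fun j ↦ (-1 : R) ^ j),
    neg_one_geom_sum, if_neg (Nat.not_even_iff_odd.mpr hι)]

end SignSums

section SignedDomination

variable {V W : Type*} [Fintype V] [Fintype W] {G : SimpleGraph V} {H : SimpleGraph W}

/-- `f` is a signed dominating function of `G`: it takes the values `±1`, and its sum over each
closed neighborhood `N[v]`, written as `f v` plus the sum over the open neighborhood, is at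
least `1`. -/
structure IsSignedDominating_s8 (G : SimpleGraph V) (f : V → ℤ) : Prop where
  eq_one_or_eq_neg_one : ∀ v, f v = 1 ∨ f v = -1
  one_le_add_sum : ∀ v, 1 ≤ f v + ∑ u ∈ G.neighborFinset v, f u

lemma isSignedDominating_one (G : SimpleGraph V) : IsSignedDominating_s8 G fun _ ↦ 1 where
  eq_one_or_eq_neg_one _ := .inl rfl
  one_le_add_sum v := by simp

lemma IsSignedDominating_s8.comp_iso {f : W → ℤ} (hf : IsSignedDominating_s8 H f) (e : G ≃g H) :
    IsSignedDominating_s8 G (f ∘ e) where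
  eq_one_or_eq_neg_one v := hf.eq_one_or_eq_neg_one (e v)
  one_le_add_sum v := by
    have hsum : ∑ u ∈ G.neighborFinset v, f (e u) = ∑ w ∈ H.neighborFinset (e v), f w :=
      sum_equiv e.toEquiv (by simp [e.map_adj_iff]) (by simp)
    simpa only [Function.comp_apply, hsum] using hf.one_le_add_sum (e v)

lemma signedDomNum_le {f : V → ℤ} (hf : IsSignedDominating_s8 G f) :
    signedDomNum G ≤ ∑ v, f v := by
  refine csInf_le ⟨-Fintype.card V, ?_⟩ ⟨f, hf.1, hf.2, rfl⟩
  rintro _ ⟨g, hg, -, rfl⟩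
  have hg_ge (v : V) : -1 ≤ g v := by rcases hg v with h | h <;> simp [h]
  simpa using sum_le_sum fun v (_ : v ∈ univ) ↦ hg_ge v

lemma le_signedDomNum {c : ℤ} (hc : ∀ f, IsSignedDominating_s8 G f → c ≤ ∑ v, f v) :
    c ≤ signedDomNum G := by
  have h1 := isSignedDominating_one G
  refine le_csInf ⟨_, _, h1.1, h1.2, rfl⟩ ?_
  rintro _ ⟨f, hf, hdom, rfl⟩
  exact hc f ⟨hf, hdom⟩

lemma signedDomNum_le_of_iso (e : G ≃g H) : signedDomNum G ≤ signedDomNum H :=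
  le_signedDomNum fun f hf ↦ (signedDomNum_le (hf.comp_iso e)).trans_eq (e.toEquiv.sum_comp f)

lemma signedDomNum_congr (e : G ≃g H) : signedDomNum G = signedDomNum H :=
  (signedDomNum_le_of_iso e).antisymm (signedDomNum_le_of_iso e.symm)

end SignedDomination

section CompleteBipartite

variable {α β : Type*}

/-- The isomorphism `K_{α,β} ≃ K_{β,α}` exchanging the two parts. -/
def completeBipartiteGraphSwap (α β : Type*) :
    completeBipartiteGraph α β ≃g completeBipartiteGraph β α where
  toEquiv := Equiv.sumComm α β
  map_rel_iff' := by simp [or_comm]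

variable [Fintype α] [Fintype β]

lemma isSignedDominating_completeBipartiteGraph_iff {f : α ⊕ β → ℤ} :
    IsSignedDominating_s8 (completeBipartiteGraph α β) f ↔
      (∀ v, f v = 1 ∨ f v = -1) ∧ (∀ a, 1 ≤ f (.inl a) + ∑ b, f (.inr b)) ∧
        ∀ b, 1 ≤ f (.inr b) + ∑ a, f (.inl a) := by
  have neighborFinset_inl (a : α) :
      (completeBipartiteGraph α β).neighborFinset (.inl a) = univ.map .inr := by
    ext (_ | _) <;> simp
  have neighborFinset_inr (b : β) :
      (completeBipartiteGraph α β).neighborFinset (.inr b) = univ.map .inl := by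
    ext (_ | _) <;> simp
  constructor
  · rintro ⟨hf, hdom⟩
    exact ⟨hf, fun a ↦ by simpa [neighborFinset_inl] using hdom (.inl a),
      fun b ↦ by simpa [neighborFinset_inr] using hdom (.inr b)⟩
  · rintro ⟨hf, hinl, hinr⟩
    refine ⟨hf, ?_⟩
    rintro (a | b)
    · simpa [neighborFinset_inl] using hinl a
    · simpa [neighborFinset_inr] using hinr b

lemma signedDomNum_completeBipartiteGraph_comm :
    signedDomNum (completeBipartiteGraph α β) = signedDomNum (completeBipartiteGraph β α) :=
  signedDomNum_congr (completeBipartiteGraphSwap α β)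

lemma min_card_three_add_one_le_signedDomNum_completeBipartiteGraph
    (hα : Odd (Fintype.card α)) (hβ : Odd (Fintype.card β)) :
    min (Fintype.card α : ℤ) 3 + 1 ≤ signedDomNum (completeBipartiteGraph α β) := by
  refine le_signedDomNum fun f hf ↦ ?_
  obtain ⟨hsign, hinl, hinr⟩ := isSignedDominating_completeBipartiteGraph_iff.mp hf
  have hodd (v : α ⊕ β) : Odd (f v) := by rcases hsign v with h | h <;> simp [h]
  obtain ⟨k, hk⟩ := odd_sum_of_odd_card hα fun a ↦ hodd (.inl a)
  obtain ⟨l, hl⟩ := odd_sum_of_odd_card hβ fun b ↦ hodd (.inr b)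
  obtain ⟨a₀⟩ : Nonempty α := Fintype.card_pos_iff.mp hα.pos
  obtain ⟨b₀⟩ : Nonempty β := Fintype.card_pos_iff.mp hβ.pos
  have hs : 1 ≤ ∑ a, f (.inl a) := by
    have := hinr b₀
    have := hsign (.inr b₀)
    omega
  have ht : 1 ≤ ∑ b, f (.inr b) := by
    have := hinl a₀
    have := hsign (.inl a₀)
    omega
  rw [Fintype.sum_sum_type]
  by_cases hone : ∀ a, f (.inl a) = 1
  · have hs_eq : ∑ a, f (.inl a) = Fintype.card α := by simp [hone]
    omega
  · obtain ⟨a, ha⟩ := not_forall.mp hone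
    have ha_neg : f (.inl a) = -1 := (hsign (.inl a)).resolve_left ha
    have ht_three : 3 ≤ ∑ b, f (.inr b) := by
      have := hinl a
      omega
    omega

lemma signedDomNum_completeBipartiteGraph_le_card_add_one
    (hα : 2 ≤ Fintype.card α) (hβ : Odd (Fintype.card β)) :
    signedDomNum (completeBipartiteGraph α β) ≤ Fintype.card α + 1 := by
  obtain ⟨g, hg, hg_sum⟩ := exists_eq_one_or_eq_neg_one_and_sum_eq_one (R := ℤ) hβ
  have hdom : IsSignedDominating_s8 (completeBipartiteGraph α β) (Sum.elim (fun _ ↦ 1) g) := by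
    refine isSignedDominating_completeBipartiteGraph_iff.mpr ⟨?_, ?_, fun b ↦ ?_⟩
    · simp [hg]
    · simp [hg_sum]
    · have hsign := hg b
      simp only [Sum.elim_inl, Sum.elim_inr, sum_const, card_univ, nsmul_eq_mul, mul_one]
      omega
  simpa [hg_sum] using signedDomNum_le hdom

lemma signedDomNum_completeBipartiteGraph_of_card_eq_three
    (hα : Fintype.card α = 3) (hβ : Odd (Fintype.card β)) :
    signedDomNum (completeBipartiteGraph α β) = 4 := by
  have hlower := min_card_three_add_one_le_signedDomNum_completeBipartiteGraph
    (α := α) (by rw [hα]; decide) hβ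
  have hupper := signedDomNum_completeBipartiteGraph_le_card_add_one (α := α) (by omega) hβ
  omega

theorem signedDomNum_completeBipartite_min_three_general
    (hα : Odd (Fintype.card α)) (hβ : Odd (Fintype.card β))
    (hthree : Fintype.card α = 3 ∨ Fintype.card β = 3) :
    signedDomNum (completeBipartiteGraph α β) = 4 := by
  rcases hthree with hα_three | hβ_three
  · exact signedDomNum_completeBipartiteGraph_of_card_eq_three hα_three hβ
  · rw [signedDomNum_completeBipartiteGraph_comm]
    exact signedDomNum_completeBipartiteGraph_of_card_eq_three hβ_three hα

end CompleteBipartite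

theorem signedDomNum_completeBipartite_min_three
    (n₁ n₂ : ℕ) (h₁ : Odd n₁) (h₂ : Odd n₂) (hmin : min n₁ n₂ = 3) :
    signedDomNum (completeBipartiteGraph (Fin n₁) (Fin n₂)) = 4 := by
  exact signedDomNum_completeBipartite_min_three_general (by simpa using h₁) (by simpa using h₂)
    (by simp only [Fintype.card_fin]; omega)
end
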